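/- Let X be a Tychonoff space and λ ∈ Ψ. The space C_λ(X) has countable T-tightness if and only if for each uncountable regular cardinal κ and each increasing κ-indexed sequence (𝒰_α : α < κ) of families of cozero subsets of X such that ⋃_{α<κ} 𝒰_α is a λ-f-cover of X, there exists β < κ such that 𝒰_β is a λ-f-cover of X. -/

import Mathlib

open Set Filter Topology TopologicalSpace ContinuousMap

/-- A subset `A` of `X` is *C-compact* if `f '' A` is compact in `ℝ` for every
continuous real-valued function `f` on `X`. -/
def IsCCompact {X : Type*} [TopologicalSpace X] (A : Set X) : Prop :=
  ∀ f : C(X, ℝ), IsCompact (f '' A)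

/-- The `λ`-open (set-open) topology on `C(X, ℝ)`, generated by the subbasic sets
`[F, U] = {f : f '' F ⊆ U}` for `F ∈ lam` and `U ⊆ ℝ` open. -/
def setOpenTopology {X : Type*} [TopologicalSpace X] (lam : Set (Set X)) :
    TopologicalSpace C(X, ℝ) :=
  TopologicalSpace.generateFrom
    {S | ∃ F ∈ lam, ∃ U : Set ℝ, IsOpen U ∧ S = {f : C(X, ℝ) | f '' F ⊆ U}}

/-- Membership in the collection `Ψ`: a family of nonempty closed C-compact subsets of `X`
forming a π-network, hereditary with respect to (closed) C-compact subsets of its elements,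
and maximal among families of nonempty sets inducing the same set-open topology. -/
structure MemPsi {X : Type*} [TopologicalSpace X] (lam : Set (Set X)) : Prop where
  nonempty : ∀ A ∈ lam, A.Nonempty
  closed : ∀ A ∈ lam, IsClosed A
  ccompact : ∀ A ∈ lam, IsCCompact A
  piNetwork : ∀ U : Set X, IsOpen U → U.Nonempty → ∃ A ∈ lam, A ⊆ U
  hereditary : ∀ A ∈ lam, ∀ B : Set X, B ⊆ A → B.Nonempty → IsClosed B → IsCCompact B →
    B ∈ lam
  maximal : ∀ lam' : Set (Set X), (∀ A ∈ lam', A.Nonempty) →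
    setOpenTopology lam' = setOpenTopology lam → lam' ⊆ lam

/-- A cozero (functional open) subset of `X`: the complement of a zero-set. -/
def IsCozero {X : Type*} [TopologicalSpace X] (U : Set X) : Prop :=
  ∃ f : C(X, ℝ), U = {x | f x ≠ 0}

/-- `𝒰` is a `λ`-f-cover: a family of cozero sets, not containing `X`, such that every
member of `lam` is contained in some member of `𝒰`. -/
def IsFCover {X : Type*} [TopologicalSpace X] (lam : Set (Set X)) (𝒰 : Set (Set X)) : Prop :=
  (Set.univ : Set X) ∉ 𝒰 ∧ (∀ U ∈ 𝒰, IsCozero U) ∧ ∀ A ∈ lam, ∃ U ∈ 𝒰, A ⊆ U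

/-- `Λ(λ)`: the collection of all `λ`-f-covers of `X`. -/
def fCovers {X : Type*} [TopologicalSpace X] (lam : Set (Set X)) : Set (Set (Set X)) :=
  {𝒰 | IsFCover lam 𝒰}

/-- The selection principle `S₁(𝒜, ℬ)`. -/
def S1 {α : Type*} (𝒜 ℬ : Set (Set α)) : Prop :=
  ∀ A : ℕ → Set α, (∀ n, A n ∈ 𝒜) →
    ∃ b : ℕ → α, (∀ n, b n ∈ A n) ∧ Set.range b ∈ ℬ

/-- The selection principle `S_fin(𝒜, ℬ)`. -/
def Sfin {α : Type*} (𝒜 ℬ : Set (Set α)) : Prop :=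
  ∀ A : ℕ → Set α, (∀ n, A n ∈ 𝒜) →
    ∃ B : ℕ → Set α, (∀ n, (B n).Finite ∧ B n ⊆ A n) ∧ (⋃ n, B n) ∈ ℬ

/-- `Ω_y` with respect to the topology `t`: sets having `y` in their closure but not
containing `y`. -/
def OmegaPt {Y : Type*} (t : TopologicalSpace Y) (y : Y) : Set (Set Y) :=
  {A | y ∈ @closure Y t A ∧ y ∉ A}

/-- Countable `(t₁, t₂)`-tightness of a bitopological space. -/
def CountableBiTightness {Y : Type*} (t1 t2 : TopologicalSpace Y) : Prop :=
  ∀ A : Set Y, ∀ f ∈ @closure Y t1 A, ∃ B ⊆ A, B.Countable ∧ f ∈ @closure Y t2 B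

/-- `X` is `λ`-`μ`-Lindelöf: every `λ`-f-cover has a countable subfamily which is a
`μ`-f-cover. -/
def LamMuLindelof {X : Type*} [TopologicalSpace X] (lam mu : Set (Set X)) : Prop :=
  ∀ 𝒰 : Set (Set X), IsFCover lam 𝒰 → ∃ 𝒱 ⊆ 𝒰, 𝒱.Countable ∧ IsFCover mu 𝒱

/-- Countable `(t₁, t₂)`-T-tightness: for every uncountable regular cardinal `κ` and every
increasing `κ`-indexed sequence of `t₁`-closed sets, the union is `t₂`-closed. -/
def CountableBiTTightness {Y : Type*} (t1 t2 : TopologicalSpace Y) : Prop :=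
  ∀ κ : Cardinal.{0}, Cardinal.aleph0 < κ → κ.IsRegular →
    ∀ A : κ.ord.ToType → Set Y, Monotone A → (∀ α, @IsClosed Y t1 (A α)) →
      @IsClosed Y t2 (⋃ α, A α)

/-- `X` is separably `λ`-submetrizable: there is a continuous map of `X` onto a separable
metric space which is one-to-one on `⋃ lam`. -/
def SeparablyLamSubmetrizable (X : Type*) [TopologicalSpace X] (lam : Set (Set X)) : Prop :=
  ∃ (Y : Type) (m : MetricSpace Y),
    @SeparableSpace Y m.toPseudoMetricSpace.toUniformSpace.toTopologicalSpace ∧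
    ∃ f : X → Y,
      @Continuous X Y _ m.toPseudoMetricSpace.toUniformSpace.toTopologicalSpace f ∧
      Function.Surjective f ∧ Set.InjOn f (⋃₀ lam)

/-- `R`-separability for a pair of topologies: from every sequence of `t₁`-dense sets one
can pick single points forming a `t₂`-dense set. -/
def RSepBi {Y : Type*} (t1 t2 : TopologicalSpace Y) : Prop :=
  ∀ D : ℕ → Set Y, (∀ n, @Dense Y t1 (D n)) →
    ∃ d : ℕ → Y, (∀ n, d n ∈ D n) ∧ @Dense Y t2 (Set.range d)

/-- `M`-separability for a pair of topologies. -/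
def MSepBi {Y : Type*} (t1 t2 : TopologicalSpace Y) : Prop :=
  ∀ D : ℕ → Set Y, (∀ n, @Dense Y t1 (D n)) →
    ∃ F : ℕ → Set Y, (∀ n, (F n).Finite ∧ F n ⊆ D n) ∧ @Dense Y t2 (⋃ n, F n)

/-- `H`-separability for a pair of topologies. -/
def HSepBi {Y : Type*} (t1 t2 : TopologicalSpace Y) : Prop :=
  ∀ D : ℕ → Set Y, (∀ n, @Dense Y t1 (D n)) →
    ∃ F : ℕ → Set Y, (∀ n, (F n).Finite ∧ F n ⊆ D n) ∧
      ∀ G : Set Y, @IsOpen Y t2 G → G.Nonempty →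
        ∀ᶠ n in Filter.atTop, (G ∩ F n).Nonempty

/-- A countable set `D` is groupable with respect to the topology `t`. -/
def GroupableIn {Y : Type*} (t : TopologicalSpace Y) (D : Set Y) : Prop :=
  ∃ A : ℕ → Set Y, (∀ n, (A n).Finite) ∧ D = ⋃ n, A n ∧
    ∀ G : Set Y, @IsOpen Y t G → G.Nonempty →
      ∀ᶠ n in Filter.atTop, (G ∩ A n).Nonempty

/-- `GN`-separability for a pair of topologies. -/
def GNSepBi {Y : Type*} (t1 t2 : TopologicalSpace Y) : Prop :=
  ∀ D : ℕ → Set Y, (∀ n, @Dense Y t1 (D n)) →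
    ∃ d : ℕ → Y, (∀ n, d n ∈ D n) ∧ @Dense Y t2 (Set.range d) ∧
      GroupableIn t2 (Set.range d)

/-- The `(t₁, t₂)`-Pytkeev property for a bitopological space. -/
def PytkeevBi {Y : Type*} (t1 t2 : TopologicalSpace Y) : Prop :=
  ∀ A : Set Y, ∀ g ∈ @closure Y t1 A, g ∉ A →
    ∃ B : ℕ → Set Y, (∀ n, (B n).Infinite ∧ B n ⊆ A) ∧
      ∀ G ∈ @nhds Y t2 g, ∃ n, B n ⊆ G

/-- A groupable `μ`-f-cover. -/
def GroupableFCover {X : Type*} [TopologicalSpace X] (mu 𝒱 : Set (Set X)) : Prop :=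
  𝒱.Countable ∧ IsFCover mu 𝒱 ∧
    ∃ G : ℕ → Set (Set X), (∀ m, (G m).Finite) ∧
      (Pairwise fun m k => Disjoint (G m) (G k)) ∧ 𝒱 = ⋃ m, G m ∧
      ∀ F ∈ mu, ∀ᶠ m in Filter.atTop, ∃ U ∈ G m, F ⊆ U

/-!
For `λ ∈ Ψ` the topology of `C_λ(X)` is that of uniform convergence on the members of `λ`:
maximality makes `λ` directed, and heredity lets a member be cut into finitely many members on which
a given function oscillates little. Hence `f ∈ closure S` iff, for each `ε > 0`, the cozero sets
`{x | |g x - f x| < ε}` with `g ∈ S` cover the members of `λ`. Conversely, a family `𝒰` of cozero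
sets covers the members of `λ` iff `0` is in the closure of the functions that equal `1` off some
`U ∈ 𝒰`. These two translations exchange increasing sequences of closed sets and increasing
sequences of covers; since `κ` has uncountable cofinality, one index serves all `ε = 1 / (n + 1)`
at once.
-/

section CCompact

variable {X : Type*} [TopologicalSpace X] {A : Set X}

theorem IsCCompact.exists_pos_le_abs (hA : IsCCompact A) (g : C(X, ℝ)) (hg : ∀ x ∈ A, g x ≠ 0) :
    ∃ ε > 0, ∀ x ∈ A, ε ≤ |g x| := by
  have h0 : (0 : ℝ) ∉ closure (g '' A) := by
    rw [(hA g).isClosed.closure_eq]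
    rintro ⟨x, hx, hgx⟩
    exact hg x hx hgx
  simpa [Metric.mem_closure_iff] using h0

theorem IsCCompact.inter_preimage_zero (hA : IsCCompact A) (k : C(X, ℝ)) :
    IsCCompact (A ∩ k ⁻¹' {0}) := by
  refine fun f ↦ (hA f).of_isClosed_subset ?_ (image_mono inter_subset_left)
  refine isClosed_of_closure_subset fun y hy ↦ ?_
  let p : C(X, ℝ) := ⟨fun x ↦ |f x - y| + |k x|, by fun_prop⟩
  have h0 : (0 : ℝ) ∈ closure (p '' A) := by
    refine Metric.mem_closure_iff.2 fun ε hε ↦ ?_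
    obtain ⟨_, ⟨x, ⟨hxA, hkx⟩, rfl⟩, hx⟩ := Metric.mem_closure_iff.1 hy ε hε
    refine ⟨p x, mem_image_of_mem p hxA, ?_⟩
    have hkx : k x = 0 := hkx
    simpa [p, hkx, Real.dist_eq, abs_sub_comm y] using hx
  rw [(hA p).isClosed.closure_eq] at h0
  obtain ⟨x, hxA, hpx⟩ := h0
  obtain ⟨hfx, hkx⟩ := (add_eq_zero_iff_of_nonneg (abs_nonneg _) (abs_nonneg _)).1 hpx
  exact ⟨x, ⟨hxA, abs_eq_zero.1 hkx⟩, sub_eq_zero.1 (abs_eq_zero.1 hfx)⟩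

theorem IsCCompact.exists_eqOn_zero_eqOn_one (hA : IsCCompact A) {U : Set X} (hU : IsCozero U)
    (hAU : A ⊆ U) : ∃ f : C(X, ℝ), EqOn f 0 A ∧ EqOn f 1 Uᶜ := by
  obtain ⟨g, rfl⟩ := hU
  obtain ⟨δ, hδ, hgδ⟩ := hA.exists_pos_le_abs g hAU
  refine ⟨⟨fun x ↦ 1 - min 1 (|g x| / δ), by fun_prop⟩, fun x hx ↦ ?_, fun x hx ↦ ?_⟩
  · have : 1 ≤ |g x| / δ := (one_le_div hδ).2 (hgδ x hx)
    simp [this]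
  · have : g x = 0 := by simpa using hx
    simp [this]

theorem isCozero_setOf_dist_lt (f g : C(X, ℝ)) (ε : ℝ) : IsCozero {x | dist (g x) (f x) < ε} := by
  refine ⟨⟨fun x ↦ max (ε - dist (g x) (f x)) 0, by fun_prop⟩, ?_⟩
  ext x
  simp

end CCompact

section SetOpenTopology

variable {X : Type*} [TopologicalSpace X] {lam : Set (Set X)}

theorem isOpen_setOf_image_subset {F : Set X} (hF : F ∈ lam) {U : Set ℝ} (hU : IsOpen U) :
    IsOpen[setOpenTopology lam] {f : C(X, ℝ) | f '' F ⊆ U} :=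
  isOpen_generateFrom_of_mem ⟨F, hF, U, hU, rfl⟩

theorem setOpenTopology_insert_union {A B : Set X} (hA : A ∈ lam) (hB : B ∈ lam) :
    setOpenTopology (insert (A ∪ B) lam) = setOpenTopology lam := by
  apply le_antisymm
  · refine le_generateFrom ?_
    rintro _ ⟨F, hF, U, hU, rfl⟩
    exact isOpen_setOf_image_subset (mem_insert_of_mem _ hF) hU
  · refine le_generateFrom ?_
    rintro _ ⟨F, rfl | hF, U, hU, rfl⟩
    · simp only [image_union, union_subset_iff, ofPred_and]
      exact @IsOpen.inter _ (setOpenTopology lam) _ _ (isOpen_setOf_image_subset hA hU)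
        (isOpen_setOf_image_subset hB hU)
    · exact isOpen_setOf_image_subset hF hU

theorem setOpenTopology_empty : setOpenTopology (∅ : Set (Set X)) = ⊤ :=
  top_unique (le_generateFrom (by simp))

theorem MemPsi.union_mem (h : MemPsi lam) {A B : Set X} (hA : A ∈ lam) (hB : B ∈ lam) :
    A ∪ B ∈ lam := by
  refine h.maximal _ ?_ (setOpenTopology_insert_union hA hB) (mem_insert _ _)
  rintro _ (rfl | hC)
  · exact (h.nonempty A hA).inl
  · exact h.nonempty _ hC

end SetOpenTopology

/-- The properties of a family `lam` of subsets of `X` which make the set-open topology the topology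
of uniform convergence on the members of `lam`. Heredity is only asked for nonempty traces of
zero-sets. -/
structure AdmissibleFamily {X : Type*} [TopologicalSpace X] (lam : Set (Set X)) : Prop where
  directedOn : DirectedOn (· ⊆ ·) lam
  isCCompact : ∀ A ∈ lam, IsCCompact A
  inter_preimage_zero_mem : ∀ A ∈ lam, ∀ k : C(X, ℝ), (A ∩ k ⁻¹' {0}).Nonempty →
    A ∩ k ⁻¹' {0} ∈ lam

theorem MemPsi.admissibleFamily {X : Type*} [TopologicalSpace X] {lam : Set (Set X)}
    (h : MemPsi lam) : AdmissibleFamily lam where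
  directedOn A hA B hB := ⟨A ∪ B, h.union_mem hA hB, subset_union_left, subset_union_right⟩
  isCCompact := h.ccompact
  inter_preimage_zero_mem A hA k hne :=
    h.hereditary A hA _ inter_subset_left hne
      ((h.closed A hA).inter (isClosed_singleton.preimage k.continuous))
      ((h.ccompact A hA).inter_preimage_zero k)

namespace AdmissibleFamily

variable {X : Type*} [TopologicalSpace X] {lam : Set (Set X)}

theorem inter_preimage_closedBall_mem (h : AdmissibleFamily lam) {F : Set X} (hF : F ∈ lam)
    (f : C(X, ℝ)) {y r : ℝ} (hne : (F ∩ f ⁻¹' Metric.closedBall y r).Nonempty) :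
    F ∩ f ⁻¹' Metric.closedBall y r ∈ lam := by
  let k : C(X, ℝ) := ⟨fun x ↦ max (dist (f x) y - r) 0, by fun_prop⟩
  have hk : k ⁻¹' {0} = f ⁻¹' Metric.closedBall y r := by
    ext x
    simp [k]
  rw [← hk] at hne ⊢
  exact h.inter_preimage_zero_mem F hF k hne

theorem setOf_dist_lt_mem_nhds (h : AdmissibleFamily lam) (f : C(X, ℝ)) {F : Set X} (hF : F ∈ lam)
    {ε : ℝ} (hε : 0 < ε) :
    {g : C(X, ℝ) | ∀ x ∈ F, dist (g x) (f x) < ε} ∈ @nhds _ (setOpenTopology lam) f := by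
  let := setOpenTopology lam
  obtain ⟨t, htF, htfin, hcover⟩ := (h.isCCompact F hF f).finite_cover_balls (e := ε / 3)
    (by positivity)
  let G (y : ℝ) : Set X := F ∩ f ⁻¹' Metric.closedBall y (ε / 3)
  have hG : ∀ y ∈ t, {g : C(X, ℝ) | g '' G y ⊆ Metric.ball y (ε / 2)} ∈ 𝓝 f := by
    intro y hy
    obtain ⟨x, hxF, rfl⟩ := htF hy
    have hGmem : G (f x) ∈ lam :=
      h.inter_preimage_closedBall_mem hF f ⟨x, hxF, Metric.mem_closedBall_self (by positivity)⟩
    refine (isOpen_setOf_image_subset hGmem Metric.isOpen_ball).mem_nhds ?_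
    exact image_subset_iff.2 fun z hz ↦ Metric.closedBall_subset_ball (by linarith) hz.2
  filter_upwards [(biInter_mem htfin).2 hG] with g hg x hx
  obtain ⟨y, hy, hfx⟩ := mem_iUnion₂.1 (hcover (mem_image_of_mem f hx))
  have hgx : dist (g x) y < ε / 2 :=
    mem_iInter₂.1 hg y hy (mem_image_of_mem g ⟨hx, Metric.ball_subset_closedBall hfx⟩)
  calc dist (g x) (f x) ≤ dist (g x) y + dist (f x) y := dist_triangle_right _ _ _
    _ < ε / 2 + ε / 3 := add_lt_add hgx hfx
    _ < ε := by linarith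

theorem hasBasis_nhds (h : AdmissibleFamily lam) (hne : lam.Nonempty) (f : C(X, ℝ)) :
    (@nhds _ (setOpenTopology lam) f).HasBasis (fun p : Set X × ℝ ↦ p.1 ∈ lam ∧ 0 < p.2)
      fun p ↦ {g | ∀ x ∈ p.1, dist (g x) (f x) < p.2} := by
  have hbasis := hasBasis_biInf_principal' (p := fun p : Set X × ℝ ↦ p.1 ∈ lam ∧ 0 < p.2)
    (s := fun p ↦ {g : C(X, ℝ) | ∀ x ∈ p.1, dist (g x) (f x) < p.2})
    (by
      rintro ⟨F, ε⟩ ⟨hF, hε⟩ ⟨G, δ⟩ ⟨hG, hδ⟩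
      obtain ⟨K, hK, hFK, hGK⟩ := h.directedOn F hF G hG
      exact ⟨(K, min ε δ), ⟨hK, lt_min hε hδ⟩,
        fun g hg x hx ↦ (hg x (hFK hx)).trans_le (min_le_left _ _),
        fun g hg x hx ↦ (hg x (hGK hx)).trans_le (min_le_right _ _)⟩)
    (hne.elim fun F hF ↦ ⟨(F, 1), hF, one_pos⟩)
  convert! hbasis using 1
  apply le_antisymm
  · exact le_iInf₂ fun p hp ↦ le_principal_iff.2 (h.setOf_dist_lt_mem_nhds f hp.1 hp.2)
  · rw [setOpenTopology, nhds_generateFrom]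
    refine le_iInf₂ ?_
    rintro _ ⟨hf, F, hF, U, hU, rfl⟩
    obtain ⟨ε, hε, hthick⟩ := (h.isCCompact F hF f).exists_thickening_subset_open hU hf
    refine le_principal_iff.2 (hbasis.mem_iff.2 ⟨(F, ε), ⟨hF, hε⟩, fun g hg ↦ ?_⟩)
    rintro _ ⟨x, hx, rfl⟩
    exact hthick (Metric.mem_thickening_iff.2 ⟨f x, mem_image_of_mem f hx, hg x hx⟩)

end AdmissibleFamily

/-- Every member of `lam` is contained in a member of `𝒰`: the covering clause of `IsFCover`. -/
def CoversMembers {X : Type*} (lam 𝒰 : Set (Set X)) : Prop :=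
  ∀ A ∈ lam, ∃ U ∈ 𝒰, A ⊆ U

/-- The sets on which some member of `S` is `ε`-close to `f`. They translate membership of `f` in
the closure of `S` into a covering property. -/
def proximitySets {X : Type*} [TopologicalSpace X] (S : Set C(X, ℝ)) (f : C(X, ℝ)) (ε : ℝ) :
    Set (Set X) :=
  (fun g : C(X, ℝ) ↦ {x | dist (g x) (f x) < ε}) '' S

/-- The functions that equal `1` off some member of `𝒰`. They translate the covering property of
`𝒰` into membership of `0` in a closure. -/
def functionsOneOff {X : Type*} [TopologicalSpace X] (𝒰 : Set (Set X)) : Set C(X, ℝ) :=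
  {f | ∃ U ∈ 𝒰, EqOn f 1 Uᶜ}

section Translation

variable {X : Type*} [TopologicalSpace X] {lam : Set (Set X)}

theorem functionsOneOff_mono {𝒰 𝒱 : Set (Set X)} (h : 𝒰 ⊆ 𝒱) :
    functionsOneOff 𝒰 ⊆ functionsOneOff 𝒱 :=
  fun _ ⟨U, hU, hf⟩ ↦ ⟨U, h hU, hf⟩

theorem functionsOneOff_iUnion {ι : Sort*} (𝒰 : ι → Set (Set X)) :
    functionsOneOff (⋃ i, 𝒰 i) = ⋃ i, functionsOneOff (𝒰 i) := by
  ext f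
  simp only [functionsOneOff, mem_iUnion, mem_ofPred_eq]
  tauto

theorem coversMembers_proximitySets {S : Set C(X, ℝ)} {f : C(X, ℝ)} {ε : ℝ} :
    CoversMembers lam (proximitySets S f ε) ↔
      ∀ F ∈ lam, ∃ g ∈ S, ∀ x ∈ F, dist (g x) (f x) < ε := by
  simp only [CoversMembers, proximitySets, exists_mem_image, subset_def, mem_ofPred_eq]

theorem CoversMembers.proximitySets_mono {S T : Set C(X, ℝ)} {f : C(X, ℝ)} {ε δ : ℝ}
    (h : CoversMembers lam (proximitySets S f ε)) (hST : S ⊆ T) (hεδ : ε ≤ δ) :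
    CoversMembers lam (proximitySets T f δ) := by
  rw [coversMembers_proximitySets] at h ⊢
  intro F hF
  obtain ⟨g, hg, hgF⟩ := h F hF
  exact ⟨g, hST hg, fun x hx ↦ (hgF x hx).trans_le hεδ⟩

theorem AdmissibleFamily.mem_closure_iff_coversMembers (h : AdmissibleFamily lam)
    (hne : lam.Nonempty) {S : Set C(X, ℝ)} {f : C(X, ℝ)} :
    f ∈ @closure _ (setOpenTopology lam) S ↔
      ∀ ε > 0, CoversMembers lam (proximitySets S f ε) := by
  let := setOpenTopology lam
  rw [mem_closure_iff_nhds_basis (h.hasBasis_nhds hne f)]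
  simp only [coversMembers_proximitySets, Prod.forall, mem_ofPred_eq]
  exact ⟨fun H ε hε F hF ↦ H F ε ⟨hF, hε⟩, fun H F ε hFε ↦ H ε hFε.2 F hFε.1⟩

theorem AdmissibleFamily.zero_mem_closure_functionsOneOff_iff (h : AdmissibleFamily lam)
    (hne : lam.Nonempty) {𝒰 : Set (Set X)} (h𝒰 : ∀ U ∈ 𝒰, IsCozero U) :
    0 ∈ @closure _ (setOpenTopology lam) (functionsOneOff 𝒰) ↔ CoversMembers lam 𝒰 := by
  simp only [h.mem_closure_iff_coversMembers hne, coversMembers_proximitySets]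
  constructor
  · intro hclose F hF
    obtain ⟨f, ⟨U, hU, hfU⟩, hfF⟩ := hclose 1 one_pos F hF
    refine ⟨U, hU, fun x hxF ↦ by_contra fun hxU ↦ ?_⟩
    simpa [hfU hxU] using hfF x hxF
  · intro hcover ε hε F hF
    obtain ⟨U, hU, hFU⟩ := hcover F hF
    obtain ⟨f, hf0, hf1⟩ := (h.isCCompact F hF).exists_eqOn_zero_eqOn_one (h𝒰 U hU) hFU
    exact ⟨f, ⟨U, hU, hf1⟩, fun x hx ↦ by simpa [hf0 hx] using hε⟩

end Translation

theorem bddAbove_of_countable_of_aleph0_lt_cof {J : Type*} [LinearOrder J]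
    (hJ : Cardinal.aleph0 < Order.cof J) {s : Set J} (hs : s.Countable) : BddAbove s :=
  .of_not_isCofinal fun hcof ↦ hJ.not_ge ((Order.cof_le hcof).trans hs.le_aleph0)

/-- Selection of a single cover from a monotone `J`-indexed family of cozero families whose union
covers the members of `lam`. Unlike for `λ`-f-covers, `X` itself may belong to the families. -/
def CozeroSelection {X : Type*} [TopologicalSpace X] (J : Type*) [Preorder J]
    (lam : Set (Set X)) : Prop :=
  ∀ 𝒰 : J → Set (Set X), Monotone 𝒰 → (∀ j, ∀ V ∈ 𝒰 j, IsCozero V) →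
    CoversMembers lam (⋃ j, 𝒰 j) → ∃ j, CoversMembers lam (𝒰 j)

section Selection

variable {X : Type*} [TopologicalSpace X] {lam : Set (Set X)} {J : Type*}

theorem cozeroSelection_iff_isFCover [Preorder J] :
    CozeroSelection J lam ↔
      ∀ 𝒰 : J → Set (Set X), Monotone 𝒰 → (∀ j, ∀ V ∈ 𝒰 j, IsCozero V) →
        IsFCover lam (⋃ j, 𝒰 j) → ∃ j, IsFCover lam (𝒰 j) := by
  refine forall₃_congr fun 𝒰 _ hcozero ↦ ⟨fun hsel hcover ↦ ?_, fun hsel hcover ↦ ?_⟩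
  · obtain ⟨j, hj⟩ := hsel hcover.2.2
    exact ⟨j, fun huniv ↦ hcover.1 (mem_iUnion_of_mem j huniv), hcozero j, hj⟩
  · by_cases huniv : univ ∈ ⋃ j, 𝒰 j
    · obtain ⟨j, hj⟩ := mem_iUnion.1 huniv
      exact ⟨j, fun A _ ↦ ⟨univ, hj, subset_univ A⟩⟩
    · have hcozero' : ∀ V ∈ ⋃ j, 𝒰 j, IsCozero V := by simpa using fun V j ↦ hcozero j V
      obtain ⟨j, hj⟩ := hsel ⟨huniv, hcozero', hcover⟩
      exact ⟨j, hj.2.2⟩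

theorem AdmissibleFamily.cozeroSelection_of_isClosed_iUnion [Preorder J]
    (h : AdmissibleFamily lam) (hne : lam.Nonempty)
    (hclosed : ∀ A : J → Set C(X, ℝ), Monotone A → (∀ j, IsClosed[setOpenTopology lam] (A j)) →
      IsClosed[setOpenTopology lam] (⋃ j, A j)) :
    CozeroSelection J lam := by
  let := setOpenTopology lam
  intro 𝒰 hmono hcozero hcover
  have hcozero' : ∀ V ∈ ⋃ j, 𝒰 j, IsCozero V := by simpa using fun V j ↦ hcozero j V
  have hclosure : closure (⋃ j, functionsOneOff (𝒰 j)) ⊆ ⋃ j, closure (functionsOneOff (𝒰 j)) :=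
    closure_minimal (iUnion_mono fun _ ↦ subset_closure) <|
      hclosed _ (fun _ _ hij ↦ closure_mono (functionsOneOff_mono (hmono hij)))
        fun _ ↦ isClosed_closure
  have hzero : 0 ∈ closure (⋃ j, functionsOneOff (𝒰 j)) := by
    rw [← functionsOneOff_iUnion]
    exact (h.zero_mem_closure_functionsOneOff_iff hne hcozero').2 hcover
  obtain ⟨j, hj⟩ := mem_iUnion.1 (hclosure hzero)
  exact ⟨j, (h.zero_mem_closure_functionsOneOff_iff hne (hcozero j)).1 hj⟩

theorem AdmissibleFamily.isClosed_iUnion_of_cozeroSelection [LinearOrder J]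
    (h : AdmissibleFamily lam) (hne : lam.Nonempty) (hJ : Cardinal.aleph0 < Order.cof J)
    (hsel : CozeroSelection J lam) {A : J → Set C(X, ℝ)} (hmono : Monotone A)
    (hA : ∀ j, IsClosed[setOpenTopology lam] (A j)) :
    IsClosed[setOpenTopology lam] (⋃ j, A j) := by
  let := setOpenTopology lam
  refine isClosed_of_closure_subset fun f hf ↦ ?_
  have hselect (n : ℕ) : ∃ j, CoversMembers lam (proximitySets (A j) f (1 / (n + 1))) := by
    refine hsel (fun j ↦ proximitySets (A j) f (1 / (n + 1)))
      (fun i j hij ↦ image_mono (hmono hij)) ?_ ?_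
    · rintro j _ ⟨g, -, rfl⟩
      exact isCozero_setOf_dist_lt f g _
    · simp only [proximitySets, ← image_iUnion]
      exact (h.mem_closure_iff_coversMembers hne).1 hf _ Nat.one_div_pos_of_nat
  choose b hb using hselect
  obtain ⟨j, hj⟩ := bddAbove_of_countable_of_aleph0_lt_cof hJ (countable_range b)
  refine mem_iUnion_of_mem j ?_
  rw [← (hA j).closure_eq, h.mem_closure_iff_coversMembers hne]
  intro ε hε
  obtain ⟨n, hn⟩ := exists_nat_one_div_lt hε
  exact (hb n).proximitySets_mono (hmono (hj (mem_range_self n))) hn.le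

end Selection

theorem tTightness_iff_fCover_selection_general {X : Type*} [TopologicalSpace X]
    {lam : Set (Set X)} (h : AdmissibleFamily lam) {J : Type*} [LinearOrder J]
    (hJ : Cardinal.aleph0 < Order.cof J) :
    (∀ A : J → Set C(X, ℝ), Monotone A → (∀ j, IsClosed[setOpenTopology lam] (A j)) →
        IsClosed[setOpenTopology lam] (⋃ j, A j)) ↔
      ∀ 𝒰 : J → Set (Set X), Monotone 𝒰 → (∀ j, ∀ V ∈ 𝒰 j, IsCozero V) →
        IsFCover lam (⋃ j, 𝒰 j) → ∃ j, IsFCover lam (𝒰 j) := by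
  rw [← cozeroSelection_iff_isFCover]
  obtain rfl | hne := lam.eq_empty_or_nonempty
  · let := setOpenTopology (∅ : Set (Set X))
    have : IndiscreteTopology C(X, ℝ) := ⟨setOpenTopology_empty⟩
    have : Nonempty J := Order.cof_ne_zero_iff.1 (Cardinal.aleph0_pos.trans hJ).ne'
    exact iff_of_true (fun A _ hA ↦ isClosed_iUnion hA)
      fun 𝒰 _ _ _ ↦ ⟨Classical.arbitrary J, fun F hF ↦ hF.elim⟩
  · exact ⟨h.cozeroSelection_of_isClosed_iUnion hne,
      fun hsel A ↦ h.isClosed_iUnion_of_cozeroSelection hne hJ hsel⟩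

/-- For a Tychonoff space `X` and `λ ∈ Ψ`, `C_λ(X)` has countable T-tightness
iff for each uncountable regular cardinal `κ` and each increasing `κ`-indexed sequence
`(𝒰_α : α < κ)` of families of cozero subsets of `X` whose union is a `λ`-f-cover of `X`,
some `𝒰_β` is a `λ`-f-cover of `X`. -/
theorem tTightness_iff_fCover_selection
    {X : Type*} [TopologicalSpace X] [T35Space X]
    (lam : Set (Set X)) (hlam : MemPsi lam) :
    CountableBiTTightness (setOpenTopology lam) (setOpenTopology lam) ↔
      (∀ κ : Cardinal.{0}, Cardinal.aleph0 < κ → κ.IsRegular →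
        ∀ 𝒰 : κ.ord.ToType → Set (Set X), Monotone 𝒰 →
          (∀ α, ∀ V ∈ 𝒰 α, IsCozero V) →
          IsFCover lam (⋃ α, 𝒰 α) →
          ∃ β, IsFCover lam (𝒰 β)) :=
  forall₃_congr fun κ hκ hreg ↦ tTightness_iff_fCover_selection_general hlam.admissibleFamily
    (by rwa [Ordinal.cof_toType, hreg.cof_ord])
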